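/- For every spider T on n vertices with exactly 4 legs, h(T) ≥ (n − 1)/3. -/

import Mathlib

open Finset

/-- The multiset of pairwise distances between distinct vertices of `S` in `G`
(one entry for each unordered pair of distinct vertices of `S`). -/
noncomputable def distMultiset {V : Type*} (G : SimpleGraph V) (S : Finset V) : Multiset ℕ :=
  letI := Classical.decEq V
  (S.sym2.filter fun p => ¬ p.IsDiag).val.map
    (Sym2.lift ⟨fun a b => G.dist a b, fun _ _ => SimpleGraph.dist_comm⟩)

/-- Two disjoint vertex sets are homometric if their distance multisets coincide. -/
def Homometric {V : Type*} (G : SimpleGraph V) (S₁ S₂ : Finset V) : Prop :=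
  Disjoint S₁ S₂ ∧ distMultiset G S₁ = distMultiset G S₂

/-- `h(G)`: the largest `h` such that `G` contains two disjoint homometric sets of
size `h` each. -/
noncomputable def homNumber {V : Type*} (G : SimpleGraph V) : ℕ :=
  sSup {h : ℕ | ∃ S₁ S₂ : Finset V, Homometric G S₁ S₂ ∧ S₁.card = h ∧ S₂.card = h}

/-- A spider with head `v` and `k` legs: a tree in which `v` has degree `k` and every
other vertex has degree at most `2`.  (The components of `T − v` are then exactly `k`
vertex-disjoint paths, each joined to `v` by one edge at an endpoint.) -/
def IsSpider {V : Type*} [Fintype V] (G : SimpleGraph V) [DecidableRel G.Adj]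
    (v : V) (k : ℕ) : Prop :=
  G.IsTree ∧ G.degree v = k ∧ ∀ u, u ≠ v → G.degree u ≤ 2

/-!
Two halves of a geodesic are translates of each other, so `dist u w ≤ 2 * h(G)` for all `u`, `w`;
applied to the tips of two legs, this bounds the sum of their lengths by `2 * h(G)`.  On the other
hand, distances between vertices of a spider depend only on their depths below the head and on
whether they share a leg.  Hence, if the legs `a, b` are paired with `c, d` and each pair is cut
down to the shorter length, the two resulting pairs of legs are homometric, so the two shorter
lengths add up to at most `h(G)`.  The two longer ones add up to at most `2 * h(G)`, and all four
lengths add up to `n - 1`.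
-/

section HomNumber

variable {V : Type*} {G : SimpleGraph V}

theorem distMultiset_image {W : Type*} [DecidableEq W] {H : SimpleGraph W} {S : Finset V}
    {f : V → W} (hf : Set.InjOn f S)
    (hdist : ∀ x ∈ S, ∀ y ∈ S, H.dist (f x) (f y) = G.dist x y) :
    distMultiset H (S.image f) = distMultiset G S := by
  let _ := Classical.decEq V
  have hdiag : ∀ p ∈ S.val.sym2, ¬ (p.map f).IsDiag ↔ ¬ p.IsDiag := by
    rintro ⟨x, y⟩ hp
    rw [Multiset.mk_mem_sym2_iff] at hp
    exact not_congr (hf.eq_iff hp.1 hp.2)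
  rw [distMultiset, distMultiset, Subsingleton.elim (Classical.decEq W) ‹DecidableEq W›]
  simp only [filter_val, sym2_val, image_val_of_injOn hf, Multiset.sym2_map,
    Multiset.filter_map, Multiset.map_map]
  refine Multiset.map_congr (Multiset.filter_congr hdiag) ?_
  rintro ⟨x, y⟩ hp
  have hxy := Multiset.mk_mem_sym2_iff.1 (Multiset.mem_of_mem_filter hp)
  exact hdist x hxy.1 y hxy.2

theorem bddAbove_card_homometric [Finite V] (G : SimpleGraph V) :
    BddAbove {h : ℕ | ∃ S₁ S₂ : Finset V, Homometric G S₁ S₂ ∧ #S₁ = h ∧ #S₂ = h} := by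
  cases nonempty_fintype V
  refine ⟨Fintype.card V, ?_⟩
  rintro _ ⟨S₁, _, _, rfl, _⟩
  exact card_le_univ S₁

theorem card_le_homNumber [Finite V] (hG : G.Connected) {S : Finset V} {f : V → V}
    (hdist : ∀ x ∈ S, ∀ y ∈ S, G.dist (f x) (f y) = G.dist x y) (hdisj : ∀ x ∈ S, f x ∉ S) :
    #S ≤ homNumber G := by
  classical
  have hf : Set.InjOn f S := fun x hx y hy hxy => by
    rw [← hG.dist_eq_zero_iff, ← hdist x hx y hy, hxy, SimpleGraph.dist_self]
  have hhom : Homometric G S (S.image f) :=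
    ⟨disjoint_right.2 (forall_mem_image.2 hdisj), (distMultiset_image hf hdist).symm⟩
  exact le_csSup (bddAbove_card_homometric G) ⟨S, S.image f, hhom, rfl, card_image_of_injOn hf⟩

theorem dist_getVert_getVert {u w : V} {p : G.Walk u w} (hp : p.length = G.dist u w) {i j : ℕ}
    (hij : i ≤ j) (hj : j ≤ p.length) : G.dist (p.getVert i) (p.getVert j) = j - i := by
  have hsub : ((p.drop i).take (j - i)).IsSubwalk p :=
    ((p.drop i).isSubwalk_take _).trans (p.isSubwalk_drop i)
  have hlen := SimpleGraph.length_eq_dist_of_subwalk hp hsub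
  rw [SimpleGraph.Walk.take_length, SimpleGraph.Walk.drop_length,
    SimpleGraph.Walk.drop_getVert, Nat.add_sub_cancel' hij] at hlen
  omega

theorem dist_le_two_mul_homNumber [Finite V] (hG : G.Connected) (u w : V) :
    G.dist u w ≤ 2 * homNumber G := by
  classical
  obtain ⟨p, hp⟩ := hG.exists_walk_length_eq_dist u w
  have hdist : ∀ {i j : ℕ}, i ≤ p.length → j ≤ p.length →
      G.dist (p.getVert i) (p.getVert j) = (j - i) + (i - j) := by
    intro i j hi hj
    rcases le_total i j with h | h
    · rw [dist_getVert_getVert hp h hj]; omega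
    · rw [SimpleGraph.dist_comm, dist_getVert_getVert hp h hi]; omega
  have hstart : ∀ {i : ℕ}, i ≤ p.length → G.dist u (p.getVert i) = i := fun {i} hi => by
    simpa using dist_getVert_getVert hp i.zero_le hi
  -- The first half of the geodesic is shifted onto the second half.
  set m := (p.length + 1) / 2
  let S : Finset V := (range m).image p.getVert
  have hcard : #S = m := by
    refine (card_image_of_injOn fun i hi j hj hij => ?_).trans (card_range m)
    rw [coe_range, Set.mem_Iio] at hi hj
    rw [← hstart (i := i) (by omega), hij, hstart (by omega)]
  have hle := card_le_homNumber hG (S := S) (f := fun x => p.getVert (G.dist u x + m)) ?_ ?_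
  · omega
  · simp only [S, forall_mem_image, mem_range]
    intro i hi j hj
    rw [hstart (by omega), hstart (by omega), hdist (by omega) (by omega),
      hdist (by omega) (by omega)]
    omega
  · refine forall_mem_image.2 fun i hi hmem => ?_
    obtain ⟨j, hj, hij⟩ := mem_image.1 hmem
    rw [mem_range] at hi hj
    rw [hstart (by omega)] at hij
    have := congrArg (G.dist u) hij
    rw [hstart (by omega), hstart (by omega)] at this
    omega

end HomNumber

section Branch

variable {V : Type*} [Fintype V] {G : SimpleGraph V} {u v w w' x y : V}

open scoped Classical in
/-- The branch of `G` at `v` through `w`: the vertices reached from `v` by a geodesic whose first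
edge is `vw`, and no vertex at all unless `w` is a neighbour of `v`.  If `G` is a spider with head
`v`, the nonempty branches at `v` are its legs. -/
noncomputable def branch (G : SimpleGraph V) (v w : V) : Finset V :=
  {u | G.Adj v w ∧ G.dist v u = G.dist w u + 1}

theorem mem_branch : u ∈ branch G v w ↔ G.Adj v w ∧ G.dist v u = G.dist w u + 1 := by
  simp [branch]

theorem mem_branch_self (h : G.Adj v w) : w ∈ branch G v w :=
  mem_branch.2 ⟨h, by rw [SimpleGraph.dist_self, SimpleGraph.dist_eq_one_iff_adj.2 h]⟩

theorem ne_of_mem_branch (hu : u ∈ branch G v w) : u ≠ v := by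
  rintro rfl
  simp [mem_branch] at hu

theorem one_le_dist_of_mem_branch (hu : u ∈ branch G v w) : 1 ≤ G.dist v u := by
  have := (mem_branch.1 hu).2
  omega

theorem exists_mem_branch (hG : G.Connected) (hu : u ≠ v) : ∃ w, u ∈ branch G v w := by
  obtain ⟨p, hp⟩ := hG.exists_walk_length_eq_dist v u
  cases p with
  | nil => exact absurd rfl hu
  | @cons _ w _ h q =>
    have hq := SimpleGraph.length_eq_dist_of_subwalk hp (q.isSubwalk_cons h)
    exact ⟨w, mem_branch.2 ⟨h, by rw [← hp, ← hq, SimpleGraph.Walk.length_cons]⟩⟩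

theorem mem_branch_of_dist_le (hG : G.Connected) (hx : x ∈ branch G v w)
    (hy : G.dist v x + G.dist x y ≤ G.dist v y) : y ∈ branch G v w := by
  obtain ⟨h, hx⟩ := mem_branch.1 hx
  have hvw := SimpleGraph.dist_eq_one_iff_adj.2 h
  have hvy := hG.dist_triangle (u := v) (v := w) (w := y)
  have hwy := hG.dist_triangle (u := w) (v := x) (w := y)
  exact mem_branch.2 ⟨h, by omega⟩

theorem exists_mem_branch_dist_eq_of_le (hG : G.Connected) (hu : u ∈ branch G v w) {i : ℕ}
    (hi : 1 ≤ i) (hiu : i ≤ G.dist v u) :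
    ∃ x ∈ branch G v w, G.dist v x = i ∧ G.dist x u = G.dist v u - i := by
  obtain ⟨h, hu⟩ := mem_branch.1 hu
  obtain ⟨p, hp⟩ := hG.exists_walk_length_eq_dist w u
  have hwx := dist_getVert_getVert hp (i - 1).zero_le (by omega)
  have hxu := dist_getVert_getVert hp (i := i - 1) (by omega) le_rfl
  rw [p.getVert_zero] at hwx
  rw [p.getVert_length] at hxu
  have hvw := SimpleGraph.dist_eq_one_iff_adj.2 h
  have hvx := hG.dist_triangle (u := v) (v := w) (w := p.getVert (i - 1))
  have hvu := hG.dist_triangle (u := v) (v := p.getVert (i - 1)) (w := u)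
  exact ⟨p.getVert (i - 1), mem_branch.2 ⟨h, by omega⟩, by omega, by omega⟩

theorem eq_of_mem_branch_of_mem_branch (hG : G.IsTree) (hw : x ∈ branch G v w)
    (hw' : x ∈ branch G v w') : w = w' := by
  have exists_path : ∀ {z}, x ∈ branch G v z → ∃ p : G.Path v x, p.1.snd = z := by
    intro z hz
    obtain ⟨h, hz⟩ := mem_branch.1 hz
    obtain ⟨p, hp⟩ := hG.connected.exists_walk_length_eq_dist z x
    exact ⟨⟨p.cons h, (p.cons h).isPath_of_length_eq_dist
      (by rw [SimpleGraph.Walk.length_cons, hp, hz])⟩, p.snd_cons h⟩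
  obtain ⟨p, rfl⟩ := exists_path hw
  obtain ⟨q, rfl⟩ := exists_path hw'
  rw [(hG.isAcyclic.subsingleton_path v x).elim p q]

theorem mem_branch_of_adj (hG : G.IsTree) (hx : x ∈ branch G v w) (hy : y ≠ v)
    (hxy : G.Adj x y) : y ∈ branch G v w := by
  have hdist := SimpleGraph.dist_eq_one_iff_adj.2 hxy
  rcases hG.dist_eq_dist_add_one_of_adj v hxy with hlt | hlt
  · obtain ⟨z, hz⟩ := exists_mem_branch hG.connected hy
    have hxz : x ∈ branch G v z :=
      mem_branch_of_dist_le hG.connected hz (by rw [SimpleGraph.dist_comm (u := y)]; omega)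
    rwa [eq_of_mem_branch_of_mem_branch hG hx hxz]
  · exact mem_branch_of_dist_le hG.connected hx (by omega)

theorem mem_branch_of_walk (hG : G.IsTree) (p : G.Walk x y) (hp : v ∉ p.support)
    (hx : x ∈ branch G v w) : y ∈ branch G v w := by
  induction p with
  | nil => exact hx
  | cons h q ih =>
    rw [SimpleGraph.Walk.support_cons, List.mem_cons, not_or] at hp
    exact ih hp.2 (mem_branch_of_adj hG hx (ne_of_mem_of_not_mem q.start_mem_support hp.2) h)

theorem dist_eq_add_of_mem_branch_of_ne (hG : G.IsTree) (hx : x ∈ branch G v w)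
    (hy : y ∈ branch G v w') (hne : w ≠ w') : G.dist x y = G.dist v x + G.dist v y := by
  classical
  obtain ⟨p, hp⟩ := hG.connected.exists_walk_length_eq_dist x y
  have hv : v ∈ p.support := by
    by_contra hv
    exact hne (eq_of_mem_branch_of_mem_branch hG (mem_branch_of_walk hG p hv hx) hy)
  have htake := SimpleGraph.length_eq_dist_of_subwalk hp (p.isSubwalk_takeUntil hv)
  have hdrop := SimpleGraph.length_eq_dist_of_subwalk hp (p.isSubwalk_dropUntil hv)
  rw [← hp, ← p.take_spec hv, SimpleGraph.Walk.length_append, htake, hdrop,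
    SimpleGraph.dist_comm]

theorem pairwise_disjoint_branch (hG : G.IsTree) (v : V) :
    Pairwise fun w w' => Disjoint (branch G v w) (branch G v w') := fun _ _ hne =>
  disjoint_left.2 fun _ hw hw' => hne (eq_of_mem_branch_of_mem_branch hG hw hw')

theorem sum_card_branch_add_one (hG : G.IsTree) (v : V) [Fintype (G.neighborSet v)] :
    ∑ w ∈ G.neighborFinset v, #(branch G v w) + 1 = Fintype.card V := by
  classical
  have hcover : (G.neighborFinset v).biUnion (branch G v) = univ.erase v := by
    ext u
    simp only [mem_biUnion, SimpleGraph.mem_neighborFinset, mem_erase, mem_univ, and_true]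
    refine ⟨fun ⟨w, _, hu⟩ => ne_of_mem_branch hu, fun hu => ?_⟩
    obtain ⟨w, hw⟩ := exists_mem_branch hG.connected hu
    exact ⟨w, (mem_branch.1 hw).1, hw⟩
  rw [← card_biUnion ((pairwise_disjoint_branch hG v).set_pairwise _), hcover,
    card_erase_add_one (mem_univ v), card_univ]

end Branch

theorem eq_Icc_one_card_of_Icc_subset {s : Finset ℕ} (hs : ∀ n ∈ s, 1 ≤ n)
    (hlower : ∀ n ∈ s, Icc 1 n ⊆ s) : s = Icc 1 #s := by
  obtain rfl | hne := s.eq_empty_or_nonempty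
  · rfl
  have hmax : s = Icc 1 (s.max' hne) :=
    Subset.antisymm (fun n hn => mem_Icc.2 ⟨hs n hn, s.le_max' n hn⟩)
      (hlower _ (s.max'_mem hne))
  have hcard : #s = s.max' hne := by
    conv_lhs => rw [hmax, Nat.card_Icc, Nat.add_sub_cancel]
  rwa [hcard]

namespace IsSpider

variable {V : Type*} [Fintype V] {G : SimpleGraph V} [DecidableRel G.Adj] {v w w' x y : V} {k : ℕ}

theorem eq_or_eq_or_eq_of_adj (hG : IsSpider G v k) (hx : x ≠ v) {a b c : V} (ha : G.Adj x a)
    (hb : G.Adj x b) (hc : G.Adj x c) : a = b ∨ a = c ∨ b = c := by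
  by_contra! hne
  have hdeg : 2 < #(G.neighborFinset x) := two_lt_card_iff.2 ⟨a, b, c, by simpa, by simpa,
    by simpa, hne.1, hne.2.1, hne.2.2⟩
  exact absurd (hG.2.2 x hx) (by rwa [← G.card_neighborFinset_eq_degree, not_le])

theorem injOn_dist_branch (hG : IsSpider G v k) : Set.InjOn (G.dist v) (branch G v w) := by
  have hconn := hG.1.connected
  suffices ∀ n, ∀ x ∈ branch G v w, ∀ y ∈ branch G v w,
      G.dist v x = n + 1 → G.dist v y = n + 1 → x = y by
    intro x hx y hy hxy
    have hpos := one_le_dist_of_mem_branch hx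
    exact this (G.dist v x - 1) x hx y hy (by omega) (by omega)
  intro n
  induction n with
  | zero =>
    intro x hx y hy hvx hvy
    rw [mem_branch] at hx hy
    rw [← hconn.dist_eq_zero_iff.1 (show G.dist w x = 0 by omega),
      hconn.dist_eq_zero_iff.1 (show G.dist w y = 0 by omega)]
  | succ n ih =>
    intro x hx y hy hvx hvy
    obtain ⟨x', hx', hvx', hxx'⟩ :=
      exists_mem_branch_dist_eq_of_le hconn hx (i := n + 1) (by omega) (by omega)
    obtain ⟨y', hy', hvy', hyy'⟩ :=
      exists_mem_branch_dist_eq_of_le hconn hy (i := n + 1) (by omega) (by omega)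
    obtain rfl := ih x' hx' y' hy' hvx' hvy'
    -- A further neighbour `z` of `x'`, nearer the head, gives `x'` degree 3 unless `x = y`.
    obtain ⟨z, hz⟩ := exists_mem_branch hconn (ne_of_mem_branch hx').symm
    obtain ⟨hadj, hz⟩ := mem_branch.1 hz
    rw [SimpleGraph.dist_comm, SimpleGraph.dist_comm (u := z)] at hz
    have hadjx : G.Adj x' x := SimpleGraph.dist_eq_one_iff_adj.1 (by omega)
    have hadjy : G.Adj x' y := SimpleGraph.dist_eq_one_iff_adj.1 (by omega)
    rcases hG.eq_or_eq_or_eq_of_adj (ne_of_mem_branch hx') hadjx hadjy hadj with h | rfl | rfl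
    · exact h
    · omega
    · omega

theorem dist_eq_sub_of_mem_branch (hG : IsSpider G v k) (hx : x ∈ branch G v w)
    (hy : y ∈ branch G v w) (hle : G.dist v x ≤ G.dist v y) :
    G.dist x y = G.dist v y - G.dist v x := by
  obtain ⟨z, hz, hvz, hzy⟩ := exists_mem_branch_dist_eq_of_le hG.1.connected hy
    (one_le_dist_of_mem_branch hx) hle
  rwa [hG.injOn_dist_branch hz hx hvz] at hzy

theorem dist_eq_dist_of_mem_branch (hG : IsSpider G v k) {z z' x' y' : V}
    (hx : x ∈ branch G v w) (hy : y ∈ branch G v w') (hx' : x' ∈ branch G v z)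
    (hy' : y' ∈ branch G v z') (hiff : z = z' ↔ w = w') (hvx : G.dist v x' = G.dist v x)
    (hvy : G.dist v y' = G.dist v y) : G.dist x' y' = G.dist x y := by
  by_cases h : w = w'
  · obtain rfl := hiff.2 h
    subst h
    rcases le_total (G.dist v x) (G.dist v y) with hle | hle
    · rw [hG.dist_eq_sub_of_mem_branch hx hy hle,
        hG.dist_eq_sub_of_mem_branch hx' hy' (by omega), hvx, hvy]
    · rw [SimpleGraph.dist_comm, SimpleGraph.dist_comm (u := x),
        hG.dist_eq_sub_of_mem_branch hy hx hle,
        hG.dist_eq_sub_of_mem_branch hy' hx' (by omega), hvx, hvy]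
  · rw [dist_eq_add_of_mem_branch_of_ne hG.1 hx hy h,
      dist_eq_add_of_mem_branch_of_ne hG.1 hx' hy' (mt hiff.1 h), hvx, hvy]

theorem image_dist_branch (hG : IsSpider G v k) (w : V) :
    (branch G v w).image (G.dist v) = Icc 1 #(branch G v w) := by
  rw [← card_image_of_injOn hG.injOn_dist_branch]
  refine eq_Icc_one_card_of_Icc_subset (forall_mem_image.2 fun x => one_le_dist_of_mem_branch)
    (forall_mem_image.2 fun x hx i hi => ?_)
  rw [mem_Icc] at hi
  obtain ⟨y, hy, hvy, -⟩ := exists_mem_branch_dist_eq_of_le hG.1.connected hx hi.1 hi.2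
  exact mem_image.2 ⟨y, hy, hvy⟩

theorem exists_mem_branch_dist_eq (hG : IsSpider G v k) {i : ℕ} (hi : 1 ≤ i)
    (hiw : i ≤ #(branch G v w)) : ∃ x ∈ branch G v w, G.dist v x = i := by
  rw [← mem_image, hG.image_dist_branch w]
  exact mem_Icc.2 ⟨hi, hiw⟩

theorem card_filter_dist_le_branch (hG : IsSpider G v k) (w : V) (n : ℕ) :
    #{x ∈ branch G v w | G.dist v x ≤ n} = min #(branch G v w) n := by
  have himage : image (G.dist v) {x ∈ branch G v w | G.dist v x ≤ n} =
      Icc 1 (min #(branch G v w) n) := by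
    rw [← filter_image (p := (· ≤ n)), hG.image_dist_branch w]
    ext i
    simp only [mem_filter, mem_Icc, le_min_iff, and_assoc]
  rw [← card_image_of_injOn (hG.injOn_dist_branch.mono (filter_subset _ _)), himage,
    Nat.card_Icc, Nat.add_sub_cancel]

theorem card_branch_add_card_branch_le_two_mul_homNumber (hG : IsSpider G v k) (hw : G.Adj v w)
    (hw' : G.Adj v w') (hne : w ≠ w') :
    #(branch G v w) + #(branch G v w') ≤ 2 * homNumber G := by
  obtain ⟨x, hx, hvx⟩ := hG.exists_mem_branch_dist_eq (card_pos.2 ⟨w, mem_branch_self hw⟩) le_rfl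
  obtain ⟨y, hy, hvy⟩ := hG.exists_mem_branch_dist_eq (card_pos.2 ⟨w', mem_branch_self hw'⟩) le_rfl
  rw [← hvx, ← hvy, ← dist_eq_add_of_mem_branch_of_ne hG.1 hx hy hne]
  exact dist_le_two_mul_homNumber hG.1.connected x y

theorem sum_min_card_branch_le_homNumber (hG : IsSpider G v k) {s : Finset V} {σ : V → V}
    (hinj : Set.InjOn σ s) (hdisj : ∀ w ∈ s, σ w ∉ s) :
    ∑ w ∈ s, min #(branch G v w) #(branch G v (σ w)) ≤ homNumber G := by
  classical
  -- Each leg in `s` is truncated to the length of its partner, then mapped into it along depths.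
  let T : V → Finset V := fun w => {x ∈ branch G v w | G.dist v x ≤ #(branch G v (σ w))}
  have hT : ∀ w, T w ⊆ branch G v w := fun w => filter_subset _ _
  have hdisjT : (s : Set V).PairwiseDisjoint T := fun w _ w' _ hne =>
    (pairwise_disjoint_branch hG.1 v hne).mono (hT w) (hT w')
  have hpartner : ∀ x ∈ s.biUnion T, ∃ w ∈ s, x ∈ branch G v w ∧
      ∃ y ∈ branch G v (σ w), G.dist v y = G.dist v x := by
    intro x hx
    obtain ⟨w, hw, hxw⟩ := mem_biUnion.1 hx
    obtain ⟨hxw, hle⟩ := mem_filter.1 hxw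
    exact ⟨w, hw, hxw, hG.exists_mem_branch_dist_eq (one_le_dist_of_mem_branch hxw) hle⟩
  choose! leg hleg hmem f hf hdepth using hpartner
  have hcard : #(s.biUnion T) = ∑ w ∈ s, min #(branch G v w) #(branch G v (σ w)) :=
    (card_biUnion hdisjT).trans (sum_congr rfl fun w _ => hG.card_filter_dist_le_branch w _)
  rw [← hcard]
  refine card_le_homNumber (f := f) hG.1.connected (fun x hx y hy => ?_) fun x hx hfx => ?_
  · exact hG.dist_eq_dist_of_mem_branch (hmem x hx) (hmem y hy) (hf x hx) (hf y hy)
      (hinj.eq_iff (hleg x hx) (hleg y hy)) (hdepth x hx) (hdepth y hy)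
  · have heq := eq_of_mem_branch_of_mem_branch hG.1 (hf x hx) (hmem _ hfx)
    exact hdisj _ (hleg x hx) (heq ▸ hleg _ hfx)

theorem min_card_branch_add_min_card_branch_le_homNumber (hG : IsSpider G v k) {a b c d : V}
    (hab : a ≠ b) (hac : a ≠ c) (had : a ≠ d) (hbc : b ≠ c) (hbd : b ≠ d) (hcd : c ≠ d) :
    min #(branch G v a) #(branch G v c) + min #(branch G v b) #(branch G v d) ≤
      homNumber G := by
  classical
  have hle := hG.sum_min_card_branch_le_homNumber (s := {a, b})
    (σ := fun w => if w = a then c else d) (by simp [Set.injOn_pair, hab.symm, hcd])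
    (by simp [hab.symm, hac.symm, had.symm, hbc.symm, hbd.symm])
  simpa [sum_pair hab, hab.symm] using hle

end IsSpider

/-- For every spider `T` on `n` vertices with exactly `4` legs, `h(T) ≥ (n − 1)/3`. -/
theorem stmt9 {V : Type*} [Fintype V] (G : SimpleGraph V) [DecidableRel G.Adj] (v : V)
    (hS : IsSpider G v 4) (n : ℕ) (hn : Fintype.card V = n) :
    ((n : ℝ) - 1) / 3 ≤ homNumber G := by
  classical
  obtain ⟨a, b, c, d, hab, hac, had, hbc, hbd, hcd, hnbr⟩ :=
    card_eq_four.1 ((G.card_neighborFinset_eq_degree v).trans hS.2.1)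
  obtain ⟨ha, hb, hc, hd⟩ : G.Adj v a ∧ G.Adj v b ∧ G.Adj v c ∧ G.Adj v d := by
    simp [← SimpleGraph.mem_neighborFinset, hnbr]
  have hsum := sum_card_branch_add_one hS.1 v
  rw [hnbr, sum_insert (by simp [*]), sum_insert (by simp [*]), sum_pair hcd, hn] at hsum
  have hmin := hS.min_card_branch_add_min_card_branch_le_homNumber hab hac had hbc hbd hcd
  have hmax : max #(branch G v a) #(branch G v c) + max #(branch G v b) #(branch G v d) ≤
      2 * homNumber G := by
    have h₁ := hS.card_branch_add_card_branch_le_two_mul_homNumber ha hb hab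
    have h₂ := hS.card_branch_add_card_branch_le_two_mul_homNumber ha hd had
    have h₃ := hS.card_branch_add_card_branch_le_two_mul_homNumber hc hb hbc.symm
    have h₄ := hS.card_branch_add_card_branch_le_two_mul_homNumber hc hd hcd
    omega
  have hle : n ≤ homNumber G * 3 + 1 := by omega
  rw [div_le_iff₀ three_pos, sub_le_iff_le_add]
  exact_mod_cast hle
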